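/- arXiv:2601.22096 — 2 statements merged into one kernel-verified Lean document; each statement's English description precedes it below -/
import Mathlib

section
/- (Theorem 1, piecewise linearity and continuity in power capacity.) Fix S̄ and S0 with 0 ≤ S0 ≤ S̄, and define w(x̄) as the infimum of V(S) over feasible profiles. Then w is continuous and piecewise affine on [0, ∞): there exist finitely many breakpoints 0 = a₀ < a₁ < ⋯ < aₙ and coefficients cᵢ, dᵢ such that w(x̄) = cᵢ·x̄ + dᵢ on each interval [aᵢ, aᵢ₊₁] for i < n and w(x̄) = cₙ·x̄ + dₙ on [aₙ, ∞). -/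
/-!
The optimal value `w` is Lipschitz and takes, at every `xb ≥ 0`, the value at `xb` of one of
finitely many affine functions; a continuous function with that property is piecewise affine.

*Lipschitz.* Enlarging `xb` enlarges the feasible set, so `w` is antitone. Conversely, contracting
a profile feasible for `y` towards the constant profile `S0` by the factor `x / y` gives a profile
feasible for `x` with objective `x / y * V`; since `V ≥ -T y`, this gives `w x ≤ w y + T (y - x)`.

*Finitely many values.* The objective is concave, so its minimum over the compact feasible polytope
is attained at an extreme point (`exists_extreme_minimizer`). At an extreme point every state of
charge is linked through tight increment constraints to one that equals `S0`, `0` or `Sb`: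
otherwise all the unlinked ones could be shifted simultaneously up and down
(`exists_tight_of_extreme`). Hence each `S u` is one of `S0`, `0`, `Sb` plus at most `T` terms among
`±xb`, `±pp t`, `±pm t`, which is a finite list of affine functions of `xb` (`levels`).

*Piecewise affine.* Finitely many distinct lines have finitely many crossings, and between
consecutive crossings a continuous function following the lines must stay on one of them
(`exists_line_of_preconnected`, `piecewise_of_lines`).
-/

/-- Feasibility for the single-storage reliability-dispatch problem. -/
def Feasible (T : ℕ) (pp pm : Fin T → ℝ) (S0 Sb xb : ℝ)
    (S : Fin (T + 1) → ℝ) : Prop :=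
  S 0 = S0 ∧ ∀ t : Fin T,
    (0 ≤ S t.succ ∧ S t.succ ≤ Sb) ∧
    |S t.succ - S t.castSucc| ≤ xb ∧
    (-(pm t) ≤ S t.succ - S t.castSucc ∧ S t.succ - S t.castSucc ≤ pp t)

/-- The objective `V(S) = ∑ₜ min 0 (S (t+1) − S t)`. -/
noncomputable def V (T : ℕ) (S : Fin (T + 1) → ℝ) : ℝ :=
  ∑ t : Fin T, min 0 (S t.succ - S t.castSucc)

open Filter Topology Pointwise

/-! ### Continuous functions following finitely many lines -/

/-- The affine function with constant term `p.1` and slope `p.2`, as an additive map in `p`. -/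
def ev (x : ℝ) : ℝ × ℝ →+ ℝ where
  toFun p := p.1 + p.2 * x
  map_zero' := by simp
  map_add' p q := by simp only [Prod.fst_add, Prod.snd_add]; ring

lemma ev_apply (x : ℝ) (p : ℝ × ℝ) : ev x p = p.1 + p.2 * x := rfl

lemma continuous_ev (p : ℝ × ℝ) : Continuous fun x => ev x p := by
  simp only [ev_apply]; fun_prop

lemma exists_line_of_preconnected {f : ℝ → ℝ} (hf : Continuous f) {F : Set (ℝ × ℝ)}
    (hF : F.Finite) {s : Set ℝ} (hs : IsPreconnected s) (hne : s.Nonempty)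
    (hval : ∀ x ∈ s, ∃ p ∈ F, f x = ev x p)
    (hcross : ∀ x ∈ s, ∀ p ∈ F, ∀ q ∈ F, ev x p = ev x q → p = q) :
    ∃ p, ∀ x ∈ closure s, f x = ev x p := by
  obtain ⟨x₀, hx₀⟩ := hne
  obtain ⟨p, hp, hfp⟩ := hval x₀ hx₀
  refine ⟨p, ?_⟩
  have hcl : ∀ q : ℝ × ℝ, IsClosed {x | f x = ev x q} := fun q =>
    isClosed_eq hf (continuous_ev q)
  have hcl' : IsClosed (⋃ q ∈ F \ {p}, {x | f x = ev x q}) :=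
    (hF.subset Set.sdiff_subset).isClosed_biUnion fun q _ => hcl q
  have hsub : s ⊆ {x | f x = ev x p} := by
    by_contra hnot
    obtain ⟨y, hys, hy⟩ := Set.not_subset.1 hnot
    have hcov : s ⊆ {x | f x = ev x p} ∪ ⋃ q ∈ F \ {p}, {x | f x = ev x q} := by
      intro x hx
      obtain ⟨q, hq, hfq⟩ := hval x hx
      by_cases hqp : q = p
      · left; rw [← hqp]; exact hfq
      · right; exact Set.mem_biUnion (show q ∈ F \ {p} from ⟨hq, hqp⟩) hfq
    obtain ⟨z, hz, hz1, hz2⟩ := isPreconnected_closed_iff.1 hs _ _ (hcl p) hcl' hcov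
      ⟨x₀, hx₀, hfp⟩ ⟨y, hys, (hcov hys).resolve_left hy⟩
    obtain ⟨q, hq, hzq⟩ := Set.mem_iUnion₂.1 hz2
    have h1 : f z = ev z p := hz1
    have h2 : f z = ev z q := hzq
    exact hq.2 (hcross z hz q hq.1 p hp (h2.symm.trans h1))
  exact fun x hx => closure_minimal hsub (hcl p) hx

lemma finite_crossings {F : Set (ℝ × ℝ)} (hF : F.Finite) :
    {x : ℝ | ∃ p ∈ F, ∃ q ∈ F, p ≠ q ∧ ev x p = ev x q}.Finite := by
  -- two distinct lines that meet do so only at `(q.1 - p.1) / (p.2 - q.2)`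
  refine ((hF.prod hF).image fun pq : (ℝ × ℝ) × (ℝ × ℝ) =>
    (pq.2.1 - pq.1.1) / (pq.1.2 - pq.2.2)).subset ?_
  rintro x ⟨p, hp, q, hq, hne, he⟩
  refine ⟨(p, q), ⟨hp, hq⟩, ?_⟩
  simp only [ev_apply] at he
  have hsl : p.2 - q.2 ≠ 0 := by
    intro h
    have h2 : p.2 = q.2 := by linarith
    rw [h2] at he
    exact hne (Prod.ext (by linarith) h2)
  simp only
  rw [div_eq_iff hsl]
  linarith

lemma piecewise_of_lines {w : ℝ → ℝ} (hw : ContinuousOn w (Set.Ici 0)) {F : Set (ℝ × ℝ)}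
    (hF : F.Finite) (hval : ∀ x, 0 ≤ x → ∃ p ∈ F, w x = ev x p) :
    ∃ (n : ℕ) (a c d : Fin (n + 1) → ℝ),
      a 0 = 0 ∧ StrictMono a ∧
      (∀ i : Fin n, ∀ x ∈ Set.Icc (a i.castSucc) (a i.succ),
        w x = c i.castSucc * x + d i.castSucc) ∧
      (∀ x ∈ Set.Ici (a (Fin.last n)), w x = c (Fin.last n) * x + d (Fin.last n)) := by
  -- a globally continuous extension of `w`
  set f : ℝ → ℝ := fun x => w (max x 0) with hfdef
  have hf : Continuous f := hw.comp_continuous (by fun_prop) fun x => le_max_right x 0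
  have hfw : ∀ x, 0 ≤ x → f x = w x := fun x hx => by simp [hfdef, hx]
  -- the breakpoints: `0` and the positive crossings
  have hBfin : (insert 0
      ({x : ℝ | ∃ p ∈ F, ∃ q ∈ F, p ≠ q ∧ ev x p = ev x q} ∩ Set.Ioi 0)).Finite :=
    ((finite_crossings hF).inter_of_left _).insert 0
  set B := hBfin.toFinset with hB
  have hmem : ∀ x, x ∈ B ↔
      x = 0 ∨ (∃ p ∈ F, ∃ q ∈ F, p ≠ q ∧ ev x p = ev x q) ∧ 0 < x := by
    intro x; simp [hB]
  have h0B : (0 : ℝ) ∈ B := (hmem 0).2 (Or.inl rfl)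
  have hBnn : ∀ x ∈ B, 0 ≤ x := by
    intro x hx
    rcases (hmem x).1 hx with h | h
    · exact h.ge
    · exact h.2.le
  obtain ⟨n, hn⟩ : ∃ n, B.card = n + 1 :=
    Nat.exists_eq_succ_of_ne_zero (Finset.card_pos.2 ⟨0, h0B⟩).ne'
  set a := B.orderEmbOfFin hn with ha
  have hrange : ∀ x ∈ B, ∃ j, a j = x := by
    intro x hx
    have : x ∈ Set.range a := by rw [ha, Finset.range_orderEmbOfFin]; exact hx
    exact this
  have haB : ∀ j, a j ∈ B := fun j => Finset.orderEmbOfFin_mem B hn j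
  have hann : ∀ j, 0 ≤ a j := fun j => hBnn _ (haB j)
  have hline : ∀ s : Set ℝ, IsPreconnected s → s.Nonempty → (∀ x ∈ s, 0 < x) →
      (∀ x ∈ s, x ∉ B) → ∃ p, ∀ x ∈ closure s, f x = ev x p := by
    intro s hs hne hpos hdis
    refine exists_line_of_preconnected hf hF hs hne ?_ ?_
    · intro x hx
      rw [hfw x (hpos x hx).le]
      exact hval x (hpos x hx).le
    · intro x hx p hp q hq he
      by_contra hpq
      exact hdis x hx ((hmem x).2 (Or.inr ⟨⟨p, hp, q, hq, hpq, he⟩, hpos x hx⟩))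
  have hpiece : ∀ i : Fin (n + 1), ∃ p : ℝ × ℝ,
      (∀ k : Fin n, i = k.castSucc → ∀ x ∈ Set.Icc (a k.castSucc) (a k.succ), w x = ev x p) ∧
      (i = Fin.last n → ∀ x ∈ Set.Ici (a (Fin.last n)), w x = ev x p) := by
    intro i
    induction i using Fin.lastCases with
    | last =>
      obtain ⟨p, hp⟩ := hline (Set.Ioi (a (Fin.last n))) isPreconnected_Ioi
        Set.nonempty_Ioi (fun x hx => (hann _).trans_lt hx) (by
          intro x hx hxB
          obtain ⟨j, rfl⟩ := hrange x hxB
          exact absurd (a.lt_iff_lt.1 hx) (not_lt.2 (Fin.le_last j)))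
      refine ⟨p, fun k hk => absurd hk.symm (Fin.castSucc_lt_last k).ne, fun _ x hx => ?_⟩
      rw [← hfw x ((hann _).trans hx)]
      exact hp x (by rw [closure_Ioi]; exact hx)
    | cast k =>
      have hlt : a k.castSucc < a k.succ := a.lt_iff_lt.2 Fin.castSucc_lt_succ
      obtain ⟨p, hp⟩ := hline (Set.Ioo (a k.castSucc) (a k.succ)) isPreconnected_Ioo
        (Set.nonempty_Ioo.2 hlt) (fun x hx => (hann _).trans_lt hx.1) (by
          intro x hx hxB
          obtain ⟨j, rfl⟩ := hrange x hxB
          have h1 := a.lt_iff_lt.1 hx.1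
          have h2 := a.lt_iff_lt.1 hx.2
          simp only [Fin.lt_def, Fin.val_castSucc, Fin.val_succ] at h1 h2
          omega)
      refine ⟨p, fun k' hk => ?_, fun h => absurd h (Fin.castSucc_lt_last k).ne⟩
      obtain rfl := Fin.castSucc_injective n hk
      intro x hx
      rw [← hfw x ((hann _).trans hx.1)]
      exact hp x (by rw [closure_Ioo hlt.ne]; exact hx)
  choose p hp1 hp2 using hpiece
  refine ⟨n, a, fun i => (p i).2, fun i => (p i).1, ?_, a.strictMono, ?_, ?_⟩
  · obtain ⟨j, hj⟩ := hrange 0 h0B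
    refine le_antisymm ?_ (hann 0)
    rw [← hj]
    exact a.monotone (Fin.zero_le j)
  · intro i x hx
    rw [hp1 _ i rfl x hx, ev_apply]; ring
  · intro x hx
    rw [hp2 _ rfl x hx, ev_apply]; ring

/-! ### Feasible profiles and the Lipschitz bound -/

section

variable {T : ℕ} {pp pm : Fin T → ℝ} {S0 Sb : ℝ}

/-- The optimal value as a function of the power capacity. -/
noncomputable def optVal (T : ℕ) (pp pm : Fin T → ℝ) (S0 Sb xb : ℝ) : ℝ :=
  sInf {r : ℝ | ∃ S : Fin (T + 1) → ℝ, Feasible T pp pm S0 Sb xb S ∧ V T S = r}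

lemma feasible_const (hpp : ∀ t, 0 ≤ pp t) (hpm : ∀ t, 0 ≤ pm t)
    (hS0 : 0 ≤ S0) (hS0' : S0 ≤ Sb) {x : ℝ} (hx : 0 ≤ x) :
    Feasible T pp pm S0 Sb x fun _ => S0 :=
  ⟨rfl, fun t => ⟨⟨hS0, hS0'⟩, by simpa using hx, by simpa using hpm t, by simpa using hpp t⟩⟩

lemma Feasible.mem_Icc (hS0 : 0 ≤ S0) (hS0' : S0 ≤ Sb) {x : ℝ} {S : Fin (T + 1) → ℝ}
    (h : Feasible T pp pm S0 Sb x S) (u : Fin (T + 1)) : S u ∈ Set.Icc 0 Sb := by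
  induction u using Fin.cases with
  | zero => rw [h.1]; exact ⟨hS0, hS0'⟩
  | succ t => exact (h.2 t).1

lemma isCompact_feasible (hS0 : 0 ≤ S0) (hS0' : S0 ≤ Sb) (x : ℝ) :
    IsCompact {S | Feasible T pp pm S0 Sb x S} := by
  have hbox : IsCompact (Set.univ.pi fun _ : Fin (T + 1) => Set.Icc (0 : ℝ) Sb) :=
    isCompact_univ_pi fun _ => isCompact_Icc
  refine hbox.of_isClosed_subset ?_ fun S hS u _ => Feasible.mem_Icc hS0 hS0' hS u
  simp only [Feasible, Set.ofPred_and, Set.ofPred_forall]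
  refine (isClosed_eq (by fun_prop) (by fun_prop)).inter (isClosed_iInter fun t => ?_)
  refine ((isClosed_le ?_ ?_).inter (isClosed_le ?_ ?_)).inter
    ((isClosed_le ?_ ?_).inter ((isClosed_le ?_ ?_).inter (isClosed_le ?_ ?_))) <;> fun_prop

lemma continuous_V (T : ℕ) : Continuous (V T) := by
  unfold V; fun_prop

lemma neg_le_V {x : ℝ} (hx : 0 ≤ x) {S : Fin (T + 1) → ℝ} (h : Feasible T pp pm S0 Sb x S) :
    -(T * x) ≤ V T S := by
  have : ∑ _t : Fin T, -x ≤ V T S :=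
    Finset.sum_le_sum fun t _ => le_min (by linarith) (neg_le_of_abs_le (h.2 t).2.1)
  simpa using this

lemma bddBelow_values {x : ℝ} (hx : 0 ≤ x) :
    BddBelow {r : ℝ | ∃ S : Fin (T + 1) → ℝ, Feasible T pp pm S0 Sb x S ∧ V T S = r} :=
  ⟨-(T * x), by rintro r ⟨S, hS, rfl⟩; exact neg_le_V hx hS⟩

lemma Feasible.mono {x y : ℝ} (hxy : x ≤ y) {S : Fin (T + 1) → ℝ}
    (h : Feasible T pp pm S0 Sb x S) : Feasible T pp pm S0 Sb y S :=
  ⟨h.1, fun t => ⟨(h.2 t).1, (h.2 t).2.1.trans hxy, (h.2 t).2.2⟩⟩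

/-- Contraction of a feasible profile towards the constant profile `S0`. -/
lemma Feasible.contract (hpp : ∀ t, 0 ≤ pp t) (hpm : ∀ t, 0 ≤ pm t)
    (hS0 : 0 ≤ S0) (hS0' : S0 ≤ Sb) {y l : ℝ} (hl : 0 ≤ l) (hl1 : l ≤ 1)
    {S : Fin (T + 1) → ℝ} (h : Feasible T pp pm S0 Sb y S) :
    Feasible T pp pm S0 Sb (l * y) (fun u => S0 + l * (S u - S0)) ∧
      V T (fun u => S0 + l * (S u - S0)) = l * V T S := by
  have hd : ∀ t : Fin T, S0 + l * (S t.succ - S0) - (S0 + l * (S t.castSucc - S0))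
      = l * (S t.succ - S t.castSucc) := fun t => by ring
  refine ⟨⟨by simp [h.1], fun t => ?_⟩, ?_⟩
  · obtain ⟨⟨h1, h2⟩, h3, h4, h5⟩ := h.2 t
    simp only [hd]
    refine ⟨⟨by nlinarith, by nlinarith⟩, ?_, ?_, ?_⟩
    · rw [abs_mul, abs_of_nonneg hl]
      exact mul_le_mul_of_nonneg_left h3 hl
    · nlinarith [hpm t]
    · nlinarith [hpp t]
  · simp only [V, hd, Finset.mul_sum, mul_min_of_nonneg _ _ hl, mul_zero]

lemma optVal_lipschitz (hpp : ∀ t, 0 ≤ pp t) (hpm : ∀ t, 0 ≤ pm t)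
    (hS0 : 0 ≤ S0) (hS0' : S0 ≤ Sb) {x y : ℝ} (hx : 0 ≤ x) (hxy : x ≤ y) :
    optVal T pp pm S0 Sb y ≤ optVal T pp pm S0 Sb x ∧
      optVal T pp pm S0 Sb x ≤ optVal T pp pm S0 Sb y + T * (y - x) := by
  have hy := hx.trans hxy
  constructor
  · refine csInf_le_csInf (bddBelow_values hy)
      ⟨_, _, feasible_const hpp hpm hS0 hS0' hx, rfl⟩ ?_
    rintro r ⟨S, hS, rfl⟩
    exact ⟨S, hS.mono hxy, rfl⟩
  · rw [← sub_le_iff_le_add]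
    refine le_csInf ⟨_, _, feasible_const hpp hpm hS0 hS0' hy, rfl⟩ ?_
    rintro r ⟨S, hS, rfl⟩
    rw [sub_le_iff_le_add]
    rcases hy.eq_or_lt with rfl | hy0
    · obtain rfl : x = 0 := le_antisymm hxy hx
      refine (csInf_le (bddBelow_values le_rfl) ⟨S, hS, rfl⟩).trans ?_
      simp
    · obtain ⟨h1, h2⟩ := hS.contract hpp hpm hS0 hS0' (div_nonneg hx hy)
        ((div_le_one hy0).2 hxy)
      rw [div_mul_cancel₀ _ hy0.ne'] at h1
      refine (csInf_le (bddBelow_values hx) ⟨_, h1, rfl⟩).trans ?_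
      rw [h2]
      have h3 := neg_le_V hy hS
      have h4 : (1 - x / y) * -(T * y) ≤ (1 - x / y) * V T S :=
        mul_le_mul_of_nonneg_left h3 (sub_nonneg.2 ((div_le_one hy0).2 hxy))
      have h5 : (1 - x / y) * -(T * y) = -(T * (y - x)) := by
        field_simp
      linarith

lemma continuousOn_optVal (hpp : ∀ t, 0 ≤ pp t) (hpm : ∀ t, 0 ≤ pm t)
    (hS0 : 0 ≤ S0) (hS0' : S0 ≤ Sb) :
    ContinuousOn (optVal T pp pm S0 Sb) (Set.Ici 0) := by
  refine (LipschitzOnWith.of_dist_le_mul (K := (T : NNReal)) ?_).continuousOn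
  intro x hx y hy
  simp only [Real.dist_eq, NNReal.coe_natCast]
  rcases le_total x y with h | h
  · obtain ⟨h1, h2⟩ := optVal_lipschitz hpp hpm hS0 hS0' hx h
    rw [abs_of_nonneg (by linarith), abs_sub_comm, abs_of_nonneg (by linarith)]
    linarith
  · obtain ⟨h1, h2⟩ := optVal_lipschitz hpp hpm hS0 hS0' hy h
    rw [abs_sub_comm, abs_of_nonneg (by linarith), abs_of_nonneg (by linarith)]
    linarith

/-! ### Extreme minimizers -/

/-- A minimizer of `V` that is not the midpoint of two feasible profiles `S + E`, `S - E`, `E ≠ 0`. -/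
lemma exists_extreme_minimizer (hpp : ∀ t, 0 ≤ pp t) (hpm : ∀ t, 0 ≤ pm t)
    (hS0 : 0 ≤ S0) (hS0' : S0 ≤ Sb) {x : ℝ} (hx : 0 ≤ x) :
    ∃ S, Feasible T pp pm S0 Sb x S ∧ V T S = optVal T pp pm S0 Sb x ∧
      ∀ E : Fin (T + 1) → ℝ, Feasible T pp pm S0 Sb x (S + E) →
        Feasible T pp pm S0 Sb x (S - E) → E = 0 := by
  have hK := isCompact_feasible (pp := pp) (pm := pm) hS0 hS0' x
  obtain ⟨S₁, hS₁, hmin⟩ := hK.exists_isMinOn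
    ⟨fun _ => S0, feasible_const hpp hpm hS0 hS0' hx⟩ (continuous_V T).continuousOn
  have hmin' : ∀ S, Feasible T pp pm S0 Sb x S → V T S₁ ≤ V T S := fun S hS => hmin hS
  have hopt : optVal T pp pm S0 Sb x = V T S₁ := by
    refine le_antisymm (csInf_le (bddBelow_values hx) ⟨S₁, hS₁, rfl⟩)
      (le_csInf ⟨_, S₁, hS₁, rfl⟩ ?_)
    rintro r ⟨S, hS, rfl⟩
    exact hmin' S hS
  -- an extreme point of the set of minimizers
  have hM : IsCompact ({S | Feasible T pp pm S0 Sb x S} ∩ {S | V T S = V T S₁}) :=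
    hK.inter_right (isClosed_eq (continuous_V T) continuous_const)
  obtain ⟨S, ⟨hSf, hSV⟩, hext⟩ := hM.extremePoints_nonempty ⟨S₁, hS₁, rfl⟩
  have hSV' : V T S = V T S₁ := hSV
  refine ⟨S, hSf, hSV'.trans hopt.symm, fun E h1 h2 => ?_⟩
  -- by concavity both perturbations are again minimizers
  have hconc : V T (S + E) + V T (S - E) ≤ 2 * V T S := by
    simp only [V, ← Finset.sum_add_distrib, Finset.mul_sum]
    refine Finset.sum_le_sum fun t _ => ?_
    simp only [Pi.add_apply, Pi.sub_apply]
    rcases le_total 0 (S t.succ - S t.castSucc) with h | h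
    · rw [min_eq_left h]
      linarith [min_le_left 0 (S t.succ + E t.succ - (S t.castSucc + E t.castSucc)),
        min_le_left 0 (S t.succ - E t.succ - (S t.castSucc - E t.castSucc))]
    · rw [min_eq_right h]
      linarith [min_le_right 0 (S t.succ + E t.succ - (S t.castSucc + E t.castSucc)),
        min_le_right 0 (S t.succ - E t.succ - (S t.castSucc - E t.castSucc))]
  have h3 := hmin' _ h1
  have h4 := hmin' _ h2
  have h5 : S + E = S := by
    refine hext (x₁ := S + E) ⟨h1, ?_⟩ (x₂ := S - E) ⟨h2, ?_⟩
      ⟨1 / 2, 1 / 2, by norm_num, by norm_num, by norm_num, ?_⟩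
    · exact le_antisymm (by linarith) h3
    · exact le_antisymm (by linarith) h4
    · ext u
      simp only [Pi.add_apply, Pi.smul_apply, Pi.sub_apply, smul_eq_mul]
      ring
  simpa using h5

/-- The increment constraint of period `t` is tight. -/
def Tight (pp pm : Fin T → ℝ) (x : ℝ) (S : Fin (T + 1) → ℝ) (t : Fin T) : Prop :=
  S t.succ - S t.castSucc = x ∨ S t.succ - S t.castSucc = -x ∨
    S t.succ - S t.castSucc = pp t ∨ S t.succ - S t.castSucc = -pm t

/-- At an extreme feasible profile, a proper set `A` of indices containing `0` and all the indices
with `S u ∈ {0, Sb}` is left by some tight increment: otherwise the values outside `A` can be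
shifted up and down simultaneously. -/
lemma exists_tight_of_extreme {x : ℝ} {S : Fin (T + 1) → ℝ}
    (hS : Feasible T pp pm S0 Sb x S)
    (hext : ∀ E : Fin (T + 1) → ℝ, Feasible T pp pm S0 Sb x (S + E) →
        Feasible T pp pm S0 Sb x (S - E) → E = 0)
    {A : Set (Fin (T + 1))} (h0 : 0 ∈ A) (hz : ∀ u, S u = 0 → u ∈ A) (hb : ∀ u, S u = Sb → u ∈ A)
    (hA : A ≠ Set.univ) :
    ∃ t : Fin T, Tight pp pm x S t ∧
      ((t.castSucc ∈ A ∧ t.succ ∉ A) ∨ (t.castSucc ∉ A ∧ t.succ ∈ A)) := by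
  classical
  by_contra! hno
  -- the direction of the shift
  set e : Fin (T + 1) → ℝ := fun u => if u ∈ A then 0 else 1 with he
  have hev : ∀ᶠ r in 𝓝 (0 : ℝ), Feasible T pp pm S0 Sb x (S + r • e) := by
    have hbd : ∀ t : Fin T, ∀ᶠ r in 𝓝 (0 : ℝ),
        0 ≤ S t.succ + r * e t.succ ∧ S t.succ + r * e t.succ ≤ Sb := by
      intro t
      by_cases ht : t.succ ∈ A
      · refine Eventually.of_forall fun r => ?_
        simpa [he, ht] using (hS.2 t).1
      · have h1 : 0 < S t.succ := lt_of_le_of_ne (hS.2 t).1.1 fun h => ht (hz _ h.symm)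
        have h2 : S t.succ < Sb := lt_of_le_of_ne (hS.2 t).1.2 fun h => ht (hb _ h)
        have hc : Tendsto (fun r : ℝ => S t.succ + r * e t.succ) (𝓝 0) (𝓝 (S t.succ)) := by
          have : Continuous fun r : ℝ => S t.succ + r * e t.succ := by fun_prop
          simpa using this.tendsto 0
        filter_upwards [hc.eventually (lt_mem_nhds h1), hc.eventually (gt_mem_nhds h2)] with r a b
        exact ⟨a.le, b.le⟩
    have hinc : ∀ t : Fin T, ∀ᶠ r in 𝓝 (0 : ℝ),
        |S t.succ + r * e t.succ - (S t.castSucc + r * e t.castSucc)| ≤ x ∧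
        -pm t ≤ S t.succ + r * e t.succ - (S t.castSucc + r * e t.castSucc) ∧
        S t.succ + r * e t.succ - (S t.castSucc + r * e t.castSucc) ≤ pp t := by
      intro t
      by_cases ht : e t.succ = e t.castSucc
      · refine Eventually.of_forall fun r => ?_
        rw [ht, add_sub_add_right_eq_sub]
        exact (hS.2 t).2
      · have hnt : ¬ Tight pp pm x S t := by
          intro hti
          obtain ⟨h1, h2⟩ := hno t hti
          by_cases hc : t.castSucc ∈ A
          · exact ht (by simp [he, hc, h1 hc])
          · exact ht (by simp [he, hc, h2 hc])
        simp only [Tight, not_or] at hnt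
        obtain ⟨n1, n2, n3, n4⟩ := hnt
        obtain ⟨-, h3, h4, h5⟩ := hS.2 t
        obtain ⟨h6, h7⟩ := abs_le.1 h3
        have hc : Tendsto (fun r : ℝ =>
            S t.succ + r * e t.succ - (S t.castSucc + r * e t.castSucc)) (𝓝 0)
            (𝓝 (S t.succ - S t.castSucc)) := by
          have : Continuous fun r : ℝ =>
            S t.succ + r * e t.succ - (S t.castSucc + r * e t.castSucc) := by fun_prop
          simpa using this.tendsto 0
        filter_upwards [hc.eventually (gt_mem_nhds (lt_of_le_of_ne h7 n1)),
          hc.eventually (lt_mem_nhds (lt_of_le_of_ne h6 (Ne.symm n2))),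
          hc.eventually (gt_mem_nhds (lt_of_le_of_ne h5 n3)),
          hc.eventually (lt_mem_nhds (lt_of_le_of_ne h4 (Ne.symm n4)))] with r a b c d
        exact ⟨abs_le.2 ⟨b.le, a.le⟩, d.le, c.le⟩
    filter_upwards [eventually_all.2 hbd, eventually_all.2 hinc] with r h1 h2
    refine ⟨?_, fun t => ⟨h1 t, h2 t⟩⟩
    simpa [he, h0] using hS.1
  have hev' : ∀ᶠ r in 𝓝 (0 : ℝ), Feasible T pp pm S0 Sb x (S + (-r) • e) := by
    have : Tendsto (fun r : ℝ => -r) (𝓝 0) (𝓝 0) := by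
      simpa using (continuous_neg (G := ℝ)).tendsto 0
    exact this.eventually hev
  have hpos : ∀ᶠ r in 𝓝[>] (0 : ℝ), 0 < r := eventually_mem_nhdsWithin
  obtain ⟨r, ⟨h1, h2⟩, hr⟩ :=
    (((hev.and hev').filter_mono nhdsWithin_le_nhds).and hpos).exists
  have hE := hext (r • e) h1 (by simpa [sub_eq_add_neg] using h2)
  obtain ⟨u, hu⟩ := (Set.ne_univ_iff_exists_notMem A).1 hA
  have := congrFun hE u
  simp [he, hu] at this
  exact hr.ne' this

/-! ### The finite list of affine functions -/

/-- The affine functions of `xb` that occur as signed bounds on an increment, together with `0`. -/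
def steps (pp pm : Fin T → ℝ) : Set (ℝ × ℝ) :=
  {(0, 0), (0, 1), (0, -1)} ∪
    ((Set.range fun t => (pp t, 0)) ∪ (Set.range fun t => (-pp t, 0)) ∪
      (Set.range fun t => (pm t, 0)) ∪ (Set.range fun t => (-pm t, 0)))

/-- The affine functions reached from `S0`, `0`, `Sb` by adding `k` steps. -/
def levels (pp pm : Fin T → ℝ) (S0 Sb : ℝ) : ℕ → Set (ℝ × ℝ)
  | 0 => {(S0, 0), (0, 0), (Sb, 0)}
  | k + 1 => levels pp pm S0 Sb k + steps pp pm

lemma finite_levels (k : ℕ) : (levels pp pm S0 Sb k).Finite := by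
  induction k with
  | zero => simp [levels]
  | succ k ih =>
    refine ih.add (Set.Finite.union (by simp) ?_)
    exact (((Set.finite_range _).union (Set.finite_range _)).union
      (Set.finite_range _)).union (Set.finite_range _)

lemma levels_subset_succ (k : ℕ) : levels pp pm S0 Sb k ⊆ levels pp pm S0 Sb (k + 1) :=
  fun p hp => ⟨p, hp, (0, 0), by simp [steps], by simp⟩

lemma levels_zero_subset (k : ℕ) : levels pp pm S0 Sb 0 ⊆ levels pp pm S0 Sb k := by
  induction k with
  | zero => exact subset_rfl
  | succ k ih => exact ih.trans (levels_subset_succ k)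

lemma Tight.exists_step {x : ℝ} {S : Fin (T + 1) → ℝ} {t : Fin T} (h : Tight pp pm x S t) :
    (∃ q ∈ steps pp pm, S t.succ = S t.castSucc + ev x q) ∧
      ∃ q ∈ steps pp pm, S t.castSucc = S t.succ + ev x q := by
  rcases h with h | h | h | h
  · exact ⟨⟨(0, 1), by simp [steps], by simp [ev_apply]; linarith⟩,
      ⟨(0, -1), by simp [steps], by simp [ev_apply]; linarith⟩⟩
  · exact ⟨⟨(0, -1), by simp [steps], by simp [ev_apply]; linarith⟩,
      ⟨(0, 1), by simp [steps], by simp [ev_apply]; linarith⟩⟩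
  · exact ⟨⟨(pp t, 0), by simp [steps], by simp [ev_apply]; linarith⟩,
      ⟨(-pp t, 0), by simp [steps], by simp [ev_apply]; linarith⟩⟩
  · exact ⟨⟨(-pm t, 0), by simp [steps], by simp [ev_apply]; linarith⟩,
      ⟨(pm t, 0), by simp [steps], by simp [ev_apply]; linarith⟩⟩

/-- All values of an extreme feasible profile are reached in at most `T` steps: the set of indices
reached within `k` steps grows strictly with `k` until it is everything. -/
lemma mem_levels_of_extreme {x : ℝ} {S : Fin (T + 1) → ℝ}
    (hS : Feasible T pp pm S0 Sb x S)
    (hext : ∀ E : Fin (T + 1) → ℝ, Feasible T pp pm S0 Sb x (S + E) →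
        Feasible T pp pm S0 Sb x (S - E) → E = 0) (u : Fin (T + 1)) :
    ∃ p ∈ levels pp pm S0 Sb T, S u = ev x p := by
  set A : ℕ → Set (Fin (T + 1)) := fun k => {u | ∃ p ∈ levels pp pm S0 Sb k, S u = ev x p} with hA
  have hbase : ∀ k, 0 ∈ A k ∧ (∀ u, S u = 0 → u ∈ A k) ∧ ∀ u, S u = Sb → u ∈ A k := fun k =>
    ⟨⟨(S0, 0), levels_zero_subset k (by simp [levels]), by simp [ev_apply, hS.1]⟩,
      fun u hu => ⟨(0, 0), levels_zero_subset k (by simp [levels]), by simp [ev_apply, hu]⟩,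
      fun u hu => ⟨(Sb, 0), levels_zero_subset k (by simp [levels]), by simp [ev_apply, hu]⟩⟩
  have hmono : ∀ k, A k ⊆ A (k + 1) := fun k u ⟨p, hp, h⟩ => ⟨p, levels_subset_succ k hp, h⟩
  have hstep : ∀ k u v, u ∈ A k → (∃ q ∈ steps pp pm, S v = S u + ev x q) → v ∈ A (k + 1) := by
    rintro k u v ⟨p, hp, h⟩ ⟨q, hq, h'⟩
    exact ⟨p + q, Set.add_mem_add hp hq, by rw [h', h, map_add]⟩
  have hcard : ∀ k, A k = Set.univ ∨ k + 1 ≤ (A k).ncard := by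
    intro k
    induction k with
    | zero => exact Or.inr ((Set.ncard_pos).2 ⟨0, (hbase 0).1⟩)
    | succ k ih =>
      by_cases hk : A k = Set.univ
      · exact Or.inl (Set.univ_subset_iff.1 (hk ▸ hmono k))
      · right
        obtain ⟨t, ht, hc⟩ := exists_tight_of_extreme hS hext (hbase k).1 (hbase k).2.1
          (hbase k).2.2 hk
        obtain ⟨v, hv, hv'⟩ : ∃ v, v ∈ A (k + 1) ∧ v ∉ A k := by
          rcases hc with ⟨h1, h2⟩ | ⟨h1, h2⟩
          · exact ⟨_, hstep k _ _ h1 ht.exists_step.1, h2⟩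
          · exact ⟨_, hstep k _ _ h2 ht.exists_step.2, h1⟩
        have hlt : (A k).ncard < (A (k + 1)).ncard :=
          Set.ncard_lt_ncard ⟨hmono k, fun h => hv' (h hv)⟩
        have := ih.resolve_left hk
        omega
  have huniv : A T = Set.univ := by
    rcases hcard T with h | h
    · exact h
    · refine Set.eq_of_subset_of_ncard_le (Set.subset_univ _) ?_
      rw [Set.ncard_univ, Nat.card_fin]
      exact h
  have : u ∈ A T := huniv ▸ Set.mem_univ u
  exact this

lemma exists_finite_lines (hpp : ∀ t, 0 ≤ pp t) (hpm : ∀ t, 0 ≤ pm t)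
    (hS0 : 0 ≤ S0) (hS0' : S0 ≤ Sb) :
    ∃ F : Set (ℝ × ℝ), F.Finite ∧
      ∀ x, 0 ≤ x → ∃ p ∈ F, optVal T pp pm S0 Sb x = ev x p := by
  -- `T`-fold sums of `0` or a difference of two levels
  set L := levels pp pm S0 Sb T with hL
  have hLf : L.Finite := finite_levels T
  set D : Set (ℝ × ℝ) := insert 0 (L - L) with hD
  have hDf : D.Finite := (hLf.sub hLf).insert 0
  refine ⟨(fun g : Fin T → ℝ × ℝ => ∑ t, g t) '' Set.univ.pi fun _ => D,
    (Set.Finite.pi fun _ => hDf).image _, fun x hx => ?_⟩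
  · obtain ⟨S, hS, hopt, hext⟩ := exists_extreme_minimizer hpp hpm hS0 hS0' hx
    choose p hp hpS using mem_levels_of_extreme hS hext
    have hterm : ∀ t : Fin T, ∃ q ∈ D, min 0 (S t.succ - S t.castSucc) = ev x q := by
      intro t
      rcases le_total 0 (S t.succ - S t.castSucc) with h | h
      · exact ⟨0, Set.mem_insert _ _, by rw [min_eq_left h, map_zero]⟩
      · exact ⟨p t.succ - p t.castSucc, Set.mem_insert_of_mem _ (Set.sub_mem_sub (hp _) (hp _)),
          by rw [min_eq_right h, map_sub, ← hpS, ← hpS]⟩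
    choose q hq hqS using hterm
    refine ⟨∑ t, q t, ⟨q, fun t _ => hq t, rfl⟩, ?_⟩
    rw [← hopt, map_sum, V]
    exact Finset.sum_congr rfl fun t _ => hqS t

end

/-- Theorem 1 (piecewise linearity and continuity in power capacity): the
optimal value `w(x̄)` is continuous and piecewise affine on `[0, ∞)`. -/
theorem optimalValue_piecewise_affine_power (T : ℕ) (pp pm : Fin T → ℝ)
    (hpp : ∀ t, 0 ≤ pp t) (hpm : ∀ t, 0 ≤ pm t)
    (S0 Sb : ℝ) (hS0 : 0 ≤ S0) (hS0' : S0 ≤ Sb) :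
    ContinuousOn
      (fun xb => sInf {r : ℝ | ∃ S : Fin (T + 1) → ℝ,
        Feasible T pp pm S0 Sb xb S ∧ V T S = r})
      (Set.Ici (0 : ℝ)) ∧
    ∃ (n : ℕ) (a c d : Fin (n + 1) → ℝ),
      a 0 = 0 ∧ StrictMono a ∧
      (∀ i : Fin n, ∀ xb ∈ Set.Icc (a i.castSucc) (a i.succ),
        sInf {r : ℝ | ∃ S : Fin (T + 1) → ℝ,
            Feasible T pp pm S0 Sb xb S ∧ V T S = r} =
          c i.castSucc * xb + d i.castSucc) ∧
      (∀ xb ∈ Set.Ici (a (Fin.last n)),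
        sInf {r : ℝ | ∃ S : Fin (T + 1) → ℝ,
            Feasible T pp pm S0 Sb xb S ∧ V T S = r} =
          c (Fin.last n) * xb + d (Fin.last n)) := by
  have hw := continuousOn_optVal hpp hpm hS0 hS0'
  obtain ⟨F, hF, hval⟩ := exists_finite_lines hpp hpm hS0 hS0'
  exact ⟨hw, piecewise_of_lines hw hF hval⟩
end

section
/- (Round-trip efficiency, Section V-C.) Fix η ∈ [0, 1] and modify the single-storage feasibility by replacing the charging constraint S (t+1) − S t ≤ p⁺ t with S (t+1) − S t ≤ η · p⁺ t. For 0 ≤ S0, the value function v(S̄, x̄) (infimum of V over modified-feasible profiles) is antitone in S̄ on {S̄ : S̄ ≥ S0} for each fixed x̄ ≥ 0, and antitone in x̄ on [0, ∞) for each fixed S̄ ≥ S0. Hence the non-negativity of the storage MRI is preserved under round-trip efficiency. -/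
/-!
Relaxing either capacity enlarges the feasible set (`FeasibleRTE.mono`), and the infimum over a
larger set is smaller. Since `sInf` on `ℝ` takes the value `0` on empty or unbounded-below sets,
this needs two further facts: the constant profile `S0` is feasible whenever `0 ≤ S0 ≤ Sb` and
`0 ≤ xb` (`feasibleRTE_const`), and the objective is bounded below by `-∑ pm t` on feasible
profiles (`FeasibleRTE.neg_sum_le_V`).
-/

/-- Feasibility with round-trip efficiency `η` applied to charging:
`S 0 = S0`, `0 ≤ S (t+1) ≤ S̄`, `|S (t+1) − S t| ≤ x̄`,
`−p⁻ t ≤ S (t+1) − S t`, and `S (t+1) − S t ≤ η · p⁺ t`. -/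
def FeasibleRTE (T : ℕ) (pp pm : Fin T → ℝ) (eta S0 Sb xb : ℝ)
    (S : Fin (T + 1) → ℝ) : Prop :=
  S 0 = S0 ∧ ∀ t : Fin T,
    (0 ≤ S t.succ ∧ S t.succ ≤ Sb) ∧
    |S t.succ - S t.castSucc| ≤ xb ∧
    (-(pm t) ≤ S t.succ - S t.castSucc ∧ S t.succ - S t.castSucc ≤ eta * pp t)

theorem FeasibleRTE.mono {T : ℕ} {pp pm : Fin T → ℝ} {eta S0 Sb Sb' xb xb' : ℝ}
    {S : Fin (T + 1) → ℝ} (hS : Sb ≤ Sb') (hx : xb ≤ xb')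
    (h : FeasibleRTE T pp pm eta S0 Sb xb S) : FeasibleRTE T pp pm eta S0 Sb' xb' S :=
  ⟨h.1, fun t =>
    have ⟨⟨h0, h1⟩, h2, h3⟩ := h.2 t
    ⟨⟨h0, h1.trans hS⟩, h2.trans hx, h3⟩⟩

theorem feasibleRTE_const {T : ℕ} {pp pm : Fin T → ℝ} {eta S0 Sb xb : ℝ}
    (hpp : ∀ t, 0 ≤ pp t) (hpm : ∀ t, 0 ≤ pm t) (heta : 0 ≤ eta)
    (hS0 : 0 ≤ S0) (hSb : S0 ≤ Sb) (hxb : 0 ≤ xb) :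
    FeasibleRTE T pp pm eta S0 Sb xb (fun _ => S0) := by
  refine ⟨rfl, fun t => ⟨⟨hS0, hSb⟩, ?_, ?_, ?_⟩⟩
  · simpa using hxb
  · simpa using hpm t
  · simpa using mul_nonneg heta (hpp t)

theorem FeasibleRTE.neg_sum_le_V {T : ℕ} {pp pm : Fin T → ℝ} {eta S0 Sb xb : ℝ}
    {S : Fin (T + 1) → ℝ} (hpm : ∀ t, 0 ≤ pm t)
    (h : FeasibleRTE T pp pm eta S0 Sb xb S) : -∑ t, pm t ≤ V T S := by
  rw [V, ← Finset.sum_neg_distrib]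
  exact Finset.sum_le_sum fun t _ => le_min (neg_nonpos.mpr (hpm t)) (h.2 t).2.2.1

/-- Joint monotonicity in both capacities. The nonemptiness and lower bound needed for `sInf`
are supplied at the smaller and the larger pair of capacities respectively. -/
theorem sInf_V_le_of_le {T : ℕ} {pp pm : Fin T → ℝ} {eta S0 Sb Sb' xb xb' : ℝ}
    (hpp : ∀ t, 0 ≤ pp t) (hpm : ∀ t, 0 ≤ pm t) (heta : 0 ≤ eta) (hS0 : 0 ≤ S0)
    (hSb : S0 ≤ Sb) (hxb : 0 ≤ xb) (hS : Sb ≤ Sb') (hx : xb ≤ xb') :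
    sInf {r : ℝ | ∃ S : Fin (T + 1) → ℝ, FeasibleRTE T pp pm eta S0 Sb' xb' S ∧ V T S = r} ≤
      sInf {r : ℝ | ∃ S : Fin (T + 1) → ℝ, FeasibleRTE T pp pm eta S0 Sb xb S ∧ V T S = r} := by
  refine csInf_le_csInf ⟨-∑ t, pm t, ?_⟩ ?_ ?_
  · rintro _ ⟨S, hf, rfl⟩
    exact hf.neg_sum_le_V hpm
  · exact ⟨_, _, feasibleRTE_const hpp hpm heta hS0 hSb hxb, rfl⟩
  · rintro _ ⟨S, hf, rfl⟩
    exact ⟨S, hf.mono hS hx, rfl⟩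

/-- Section V-C (round-trip efficiency): the value function `v(S̄, x̄)` is
antitone in `S̄` on `{S̄ : S̄ ≥ S0}` for each fixed `x̄ ≥ 0`, and antitone
in `x̄` on `[0, ∞)` for each fixed `S̄ ≥ S0`; so the non-negativity of the
storage MRI is preserved under round-trip efficiency. -/
theorem optimalValue_antitone_RTE (T : ℕ) (pp pm : Fin T → ℝ)
    (hpp : ∀ t, 0 ≤ pp t) (hpm : ∀ t, 0 ≤ pm t)
    (eta : ℝ) (heta0 : 0 ≤ eta) (heta1 : eta ≤ 1)
    (S0 : ℝ) (hS0 : 0 ≤ S0) :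
    (∀ xb : ℝ, 0 ≤ xb →
      AntitoneOn
        (fun Sb => sInf {r : ℝ | ∃ S : Fin (T + 1) → ℝ,
          FeasibleRTE T pp pm eta S0 Sb xb S ∧ V T S = r})
        {Sb : ℝ | S0 ≤ Sb}) ∧
    (∀ Sb : ℝ, S0 ≤ Sb →
      AntitoneOn
        (fun xb => sInf {r : ℝ | ∃ S : Fin (T + 1) → ℝ,
          FeasibleRTE T pp pm eta S0 Sb xb S ∧ V T S = r})
        (Set.Ici (0 : ℝ))) := by
  exact ⟨fun xb hxb Sb hSb Sb' _ h =>
      sInf_V_le_of_le hpp hpm heta0 hS0 hSb hxb h le_rfl,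
    fun Sb hSb xb hxb xb' _ h =>
      sInf_V_le_of_le hpp hpm heta0 hS0 hSb hxb le_rfl h⟩
end
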